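/- arXiv:1605.07061 — 2 statements merged into one kernel-verified Lean document; each statement's English description precedes it below -/
import Mathlib

section
/- Let M ∈ ℚ_+^{n×m} be nonzero and column-stochastic, and let ℳ be the LMC constructed from M. Then for every d ∈ ℕ: rrk+(M) ≤ d if and only if there exists an LMC ℳ' with d+2 states over the same alphabet such that ℳ' covers ℳ and rk(ℳ') = rk(ℳ). -/
open Matrix

/-- `μ` is (the transition function of) a labelled Markov chain: all entries lie in
`[0,1]` and `∑_{σ ∈ Σ} μ(σ)` is row-stochastic. -/
def IsLMC {A S : Type} [Fintype A] [Fintype S] (μ : A → Matrix S S ℝ) : Prop :=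
  (∀ a i j, 0 ≤ μ a i j) ∧ (∀ a i j, μ a i j ≤ 1) ∧ (∀ i, ∑ a, ∑ j, μ a i j = 1)

/-- Transition matrix of a labelled Markov chain extended to words:
`μ(σ₁…σ_k) = μ(σ₁) ⋯ μ(σ_k)`, with `μ(ε) = I`. -/
noncomputable def lmcWord {A S : Type} [Fintype S] [DecidableEq S]
    (μ : A → Matrix S S ℝ) (w : List A) : Matrix S S ℝ :=
  (w.map μ).prod

/-- Entry of the backward matrix: `(B_ℳ)_{i,w} = e_i^⊤ μ(w) 𝟙`. -/
noncomputable def lmcB {A S : Type} [Fintype S] [DecidableEq S]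
    (μ : A → Matrix S S ℝ) (i : S) (w : List A) : ℝ :=
  ∑ j, lmcWord μ w i j

/-- The rank of an LMC: the dimension of the span of the columns of its backward matrix. -/
noncomputable def lmcRank {A S : Type} [Fintype S] [DecidableEq S]
    (μ : A → Matrix S S ℝ) : ℕ :=
  Module.finrank ℝ
    (Submodule.span ℝ (Set.range fun w : List A => fun i : S => lmcB μ i w))

/-- `ℳ'` (with transitions `μ'`) covers `ℳ` (with transitions `μ`) iff there is a
row-stochastic matrix `C` with `C · B_{ℳ'} = B_ℳ`. -/
def lmcCovers {A S S' : Type} [Fintype S] [DecidableEq S] [Fintype S'] [DecidableEq S']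
    (μ' : A → Matrix S' S' ℝ) (μ : A → Matrix S S ℝ) : Prop :=
  ∃ C : S → S' → ℝ, (∀ i l, 0 ≤ C i l) ∧ (∀ i, ∑ l, C i l = 1) ∧
    ∀ i (w : List A), ∑ l, C i l * lmcB μ' l w = lmcB μ i w

/-- The LMC constructed from a column-stochastic matrix `M ∈ ℝ_+^{n×m}`:
`μ(a_i)_{0,i} = 1/m`, `μ(b_j)_{i,m+1} = M_{j,i}`, `μ(✓)_{m+1,m+1} = 1`, otherwise `0`. -/
noncomputable def lmcMu {n m : ℕ} (M : Matrix (Fin n) (Fin m) ℝ) :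
    (Fin m ⊕ Fin n ⊕ Unit) →
      Matrix (Unit ⊕ Fin m ⊕ Unit) (Unit ⊕ Fin m ⊕ Unit) ℝ
  | Sum.inl i => Matrix.of fun p q =>
      match p, q with
      | Sum.inl _, Sum.inr (Sum.inl i') => if i' = i then 1 / (m : ℝ) else 0
      | _, _ => 0
  | Sum.inr (Sum.inl j) => Matrix.of fun p q =>
      match p, q with
      | Sum.inr (Sum.inl i), Sum.inr (Sum.inr _) => M j i
      | _, _ => 0
  | Sum.inr (Sum.inr _) => Matrix.of fun p q =>
      match p, q with
      | Sum.inr (Sum.inr _), Sum.inr (Sum.inr _) => 1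
      | _, _ => 0

/-- The restricted nonnegative rank: the smallest inner dimension of a nonnegative
factorization `M = W * H` with `rank W = rank M`. -/
noncomputable def rrkPos {n m : ℕ} (M : Matrix (Fin n) (Fin m) ℝ) : ℕ :=
  sInf {d : ℕ | ∃ W : Matrix (Fin n) (Fin d) ℝ, ∃ H : Matrix (Fin d) (Fin m) ℝ,
    (∀ i k, 0 ≤ W i k) ∧ (∀ k j, 0 ≤ H k j) ∧ M = W * H ∧ W.rank = M.rank}

/-! If `C` is row-stochastic and intertwines the transitions, `C * μ' a = μ a * C`, then it maps
the backward matrix of `μ'` to that of `μ`. A nonnegative factorization `M = W * H` can be rescaled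
so that `W` and `H` are column-stochastic. It then defines a chain with an initial state, one state
per inner index and a final state, and `diag(1, Hᵀ, 1)` intertwines this chain with the one
constructed from `M`. If moreover `rank W = rank M`, then `W = M * Y` for some `Y`, so left
multiplication by `diag(1, Yᵀ, 1)` recovers the backward matrix of the new chain from that of `M`,
and the two ranks agree.

Conversely, let `C * B' = B` exhibit a cover of the same rank. Then `B' = X * B` for some `X`, and
the columns of `B'` at the letters `b_j` form a matrix `W` with `M = W * H` and `W = M * Y`, where
`H` and `Y` consist of the entries of `C` and `X` at the inner states. The initial, inner and final
states of the chain of `M` enable disjoint sets of letters, so the initial and the final state each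
use a state of the cover that no inner state uses. Dropping these two leaves inner dimension `d`. -/

section LinearAlgebra

variable {R p q ι : Type*} [Fintype p]

theorem span_range_col_mul [CommSemiring R] (C : Matrix q p R) (B : Matrix p ι R) :
    Submodule.span R (Set.range (C * B).col) =
      (Submodule.span R (Set.range B.col)).map C.mulVecLin := by
  rw [Submodule.map_span, ← Set.range_comp]
  rfl

theorem finrank_span_range_col_mul_le [Field R] (C : Matrix q p R) (B : Matrix p ι R) :
    Module.finrank R (Submodule.span R (Set.range (C * B).col)) ≤
      Module.finrank R (Submodule.span R (Set.range B.col)) := by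
  rw [span_range_col_mul]
  exact Submodule.finrank_map_le _ _

theorem exists_mul_mul_eq_of_finrank_span_range_col_eq [Field R] [Fintype q]
    {C : Matrix q p R} {B : Matrix p ι R}
    (hrank : Module.finrank R (Submodule.span R (Set.range (C * B).col)) =
      Module.finrank R (Submodule.span R (Set.range B.col))) :
    ∃ X : Matrix p q R, X * (C * B) = B := by
  classical
  let U := Submodule.span R (Set.range B.col)
  let f : U →ₗ[R] q → R := C.mulVecLin.domRestrict U
  have hker : LinearMap.ker f = ⊥ := by
    have hrange : Module.finrank R (LinearMap.range f) = Module.finrank R U := by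
      rw [LinearMap.range_domRestrict, ← hrank, span_range_col_mul]
    have := LinearMap.finrank_range_add_finrank_ker f
    exact Submodule.finrank_eq_zero.mp (by omega)
  obtain ⟨g, hg⟩ := LinearMap.exists_leftInverse_of_injective f hker
  refine ⟨LinearMap.toMatrix' (U.subtype ∘ₗ g), Matrix.ext_col fun w => ?_⟩
  let b : U := ⟨B.col w, Submodule.subset_span ⟨w, rfl⟩⟩
  calc LinearMap.toMatrix' (U.subtype ∘ₗ g) *ᵥ (C *ᵥ B.col w)
    _ = (g (f b) : p → R) := LinearMap.toMatrix'_mulVec _ _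
    _ = B.col w := congrArg Subtype.val (LinearMap.congr_fun hg b)

theorem exists_eq_mul_of_rank_eq [Field R] [Fintype q] [Finite ι]
    {W : Matrix ι p R} {H : Matrix p q R} (hrank : W.rank = (W * H).rank) :
    ∃ Y : Matrix q p R, W = W * H * Y := by
  have := Fintype.ofFinite ι
  obtain ⟨X, hX⟩ := exists_mul_mul_eq_of_finrank_span_range_col_eq (C := Hᵀ) (B := Wᵀ) <| by
    rw [← rank_eq_finrank_span_cols, ← rank_eq_finrank_span_cols, ← transpose_mul,
      rank_transpose, rank_transpose, hrank]
  refine ⟨Xᵀ, ?_⟩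
  rw [← transpose_inj, transpose_mul, transpose_transpose, transpose_mul, hX]

end LinearAlgebra

section Stochastic

variable {R ι κ : Type*} [Semiring R] [PartialOrder R]

/-- Rectangular row-stochastic matrices; Mathlib's `Matrix.rowStochastic` is restricted to square
ones. -/
def IsRowStochastic [Fintype κ] (C : Matrix ι κ R) : Prop :=
  (∀ i k, 0 ≤ C i k) ∧ C *ᵥ 1 = 1

/-- Rectangular column-stochastic matrices; Mathlib's `Matrix.colStochastic` is restricted to
square ones. -/
def IsColStochastic [Fintype ι] (M : Matrix ι κ R) : Prop :=
  (∀ i k, 0 ≤ M i k) ∧ 1 ᵥ* M = 1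

theorem isRowStochastic_iff_sum [Fintype κ] {C : Matrix ι κ R} :
    IsRowStochastic C ↔ (∀ i k, 0 ≤ C i k) ∧ ∀ i, ∑ k, C i k = 1 := by
  simp [IsRowStochastic, funext_iff, mulVec, dotProduct]

theorem isColStochastic_iff_sum [Fintype ι] {M : Matrix ι κ R} :
    IsColStochastic M ↔ (∀ i k, 0 ≤ M i k) ∧ ∀ k, ∑ i, M i k = 1 := by
  simp [IsColStochastic, funext_iff, vecMul, dotProduct]

theorem IsColStochastic.transpose {R : Type*} [CommSemiring R] [PartialOrder R] [Fintype ι]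
    {M : Matrix ι κ R} (hM : IsColStochastic M) : IsRowStochastic Mᵀ :=
  ⟨fun k i => hM.1 i k, by rw [mulVec_transpose, hM.2]⟩

theorem IsRowStochastic.exists_ne_zero [Nontrivial R] [Fintype κ] {C : Matrix ι κ R}
    (hC : IsRowStochastic C) (i : ι) : ∃ k, C i k ≠ 0 := by
  by_contra! hi
  simpa [hi] using (isRowStochastic_iff_sum.mp hC).2 i

theorem IsRowStochastic.mul [IsOrderedRing R] {τ : Type*} [Fintype κ] [Fintype τ]
    {C : Matrix ι κ R} {D : Matrix κ τ R} (hC : IsRowStochastic C) (hD : IsRowStochastic D) :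
    IsRowStochastic (C * D) :=
  ⟨fun i j => Finset.sum_nonneg fun k _ => mul_nonneg (hC.1 i k) (hD.1 k j),
    by rw [← mulVec_mulVec, hD.2, hC.2]⟩

theorem one_vecMul_eq_one_of_mul {R τ : Type*} [Semiring R] [Fintype ι] [Fintype κ]
    {W : Matrix ι κ R} {T : Matrix κ τ R}
    (hW : 1 ᵥ* W = 1) (hWT : 1 ᵥ* (W * T) = 1) : 1 ᵥ* T = 1 := by
  rwa [← vecMul_vecMul, hW] at hWT

end Stochastic

section NormalizeCols

variable {R ι κ : Type*} [Field R] [Fintype ι]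

open Classical in
/-- Rescales every column of `W` to have sum `1`, and replaces the columns whose sum is `0` by the
vector `v`. -/
noncomputable def normalizeCols (v : ι → R) (W : Matrix ι κ R) : Matrix ι κ R :=
  of fun i k => if ∑ i, W i k = 0 then v i else W i k / ∑ i, W i k

theorem exists_normalizeCols_mul_eq_mul {τ : Type*} [Fintype τ] (M : Matrix ι τ R) (v : τ → R)
    (Y : Matrix τ κ R) :
    ∃ Y' : Matrix τ κ R, normalizeCols (M *ᵥ v) (M * Y) = M * Y' := by
  classical
  refine ⟨of fun j k => if ∑ i, (M * Y) i k = 0 then v j else Y j k / ∑ i, (M * Y) i k, ?_⟩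
  ext i k
  by_cases hk : ∑ i, (M * Y) i k = 0
  · simp only [normalizeCols, of_apply, Matrix.mul_apply (N := of _), if_pos hk]
    rfl
  · simp only [normalizeCols, of_apply, Matrix.mul_apply (N := of _), if_neg hk, ← mul_div_assoc,
      ← Finset.sum_div]
    rfl

variable [LinearOrder R] [IsStrictOrderedRing R] {W : Matrix ι κ R}

theorem normalizeCols_mul_diagonal [Fintype κ] [DecidableEq κ] (hW : ∀ i k, 0 ≤ W i k) (v : ι → R) :
    normalizeCols v W * diagonal (fun k => ∑ i, W i k) = W := by
  ext i k
  rw [mul_diagonal, normalizeCols, of_apply]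
  split_ifs with hk
  · rw [hk, mul_zero, (Finset.sum_eq_zero_iff_of_nonneg fun i _ => hW i k).mp hk i
      (Finset.mem_univ i)]
  · exact div_mul_cancel₀ _ hk

theorem isColStochastic_normalizeCols (hW : ∀ i k, 0 ≤ W i k) {v : ι → R} (hv : ∀ i, 0 ≤ v i)
    (hv_sum : ∑ i, v i = 1) : IsColStochastic (normalizeCols v W) := by
  refine isColStochastic_iff_sum.mpr ⟨fun i k => ?_, fun k => ?_⟩
  · rw [normalizeCols, of_apply]
    split_ifs
    · exact hv i
    · exact div_nonneg (hW i k) (Finset.sum_nonneg fun i _ => hW i k)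
  · by_cases hk : ∑ i, W i k = 0
    · simp [normalizeCols, hk, hv_sum]
    · simp [normalizeCols, hk, ← Finset.sum_div]

end NormalizeCols

section RestrictedNMF

variable {R ι κ κ' τ : Type*} [Fintype κ] [Fintype κ'] [Fintype τ]

/-- `M = W * H` is a restricted nonnegative matrix factorization (RNMF) of `M`, with inner
dimension the cardinality of `κ`. -/
def IsRNMF [CommSemiring R] [PartialOrder R] (M : Matrix ι τ R) (W : Matrix ι κ R)
    (H : Matrix κ τ R) : Prop :=
  (∀ i k, 0 ≤ W i k) ∧ (∀ k j, 0 ≤ H k j) ∧ M = W * H ∧ W.rank = M.rank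

section CommRing

variable [CommRing R] [StrongRankCondition R] [PartialOrder R] {M : Matrix ι τ R}
  {W : Matrix ι κ R} {H : Matrix κ τ R}

theorem isRNMF_of_rank_le (hW : ∀ i k, 0 ≤ W i k) (hH : ∀ k j, 0 ≤ H k j) (hM : M = W * H)
    (hrank : W.rank ≤ M.rank) : IsRNMF M W H :=
  ⟨hW, hH, hM, hrank.antisymm (hM ▸ rank_mul_le_left W H)⟩

theorem IsRNMF.submatrix (h : IsRNMF M W H) (f : κ' ↪ κ) (hf : ∀ k ∉ Set.range f, H k = 0) :
    IsRNMF M (W.submatrix id f) (H.submatrix f id) := by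
  obtain ⟨hW, hH, hM, hrank⟩ := h
  refine isRNMF_of_rank_le (fun i k => hW i (f k)) (fun k j => hH (f k) j) ?_
    ((rank_submatrix_le W id f).trans hrank.le)
  ext i j
  rw [hM]
  exact (Fintype.sum_of_injective f f.injective _ _ (fun k hk => by simp [hf k hk])
    fun k => rfl).symm

theorem IsRNMF.exists_of_embedding [IsOrderedRing R] (h : IsRNMF M W H) (f : κ ↪ κ') :
    ∃ (W' : Matrix ι κ' R) (H' : Matrix κ' τ R), IsRNMF M W' H' := by
  classical
  obtain ⟨hW, hH, hM, hrank⟩ := h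
  let E : Matrix κ κ' R := (1 : Matrix κ' κ' R).submatrix f id
  have hE : ∀ k l, 0 ≤ E k l := fun k l => zero_le_one_elem (f k) l
  have hEE : E * Eᵀ = 1 := by
    rw [transpose_submatrix, transpose_one, ← submatrix_mul _ _ _ _ _ Function.bijective_id,
      one_mul, submatrix_one_embedding]
  refine ⟨W * E, Eᵀ * H, isRNMF_of_rank_le ?_ ?_ ?_ ((rank_mul_le_left W E).trans hrank.le)⟩
  · exact fun i l => Finset.sum_nonneg fun k _ => mul_nonneg (hW i k) (hE k l)
  · exact fun l j => Finset.sum_nonneg fun k _ => mul_nonneg (hE k l) (hH k j)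
  · rw [Matrix.mul_assoc, ← Matrix.mul_assoc E, hEE, Matrix.one_mul, hM]

end CommRing

theorem IsRNMF.exists_isColStochastic [Field R] [LinearOrder R] [IsStrictOrderedRing R]
    [Fintype ι] [Nonempty τ] {M : Matrix ι τ R} {W : Matrix ι κ R} {H : Matrix κ τ R}
    (h : IsRNMF M W H) (hM : IsColStochastic M) :
    ∃ (W' : Matrix ι κ R) (H' : Matrix κ τ R),
      IsRNMF M W' H' ∧ IsColStochastic W' ∧ IsColStochastic H' := by
  classical
  obtain ⟨hW, hH, hMWH, hrank⟩ := h
  let t : τ := Classical.arbitrary τ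
  let D : Matrix κ κ R := diagonal fun k => ∑ i, W i k
  have hW' : IsColStochastic (normalizeCols (M.col t) W) :=
    isColStochastic_normalizeCols hW (fun i => hM.1 i t) ((isColStochastic_iff_sum.mp hM).2 t)
  have hM' : M = normalizeCols (M.col t) W * (D * H) := by
    rw [← Matrix.mul_assoc, normalizeCols_mul_diagonal hW, hMWH]
  have hrank' : (normalizeCols (M.col t) W).rank ≤ M.rank := by
    obtain ⟨Y, hY⟩ := exists_eq_mul_of_rank_eq (hMWH ▸ hrank)
    rw [← hMWH] at hY
    obtain ⟨Y', hY'⟩ := exists_normalizeCols_mul_eq_mul M (Pi.single t 1) Y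
    rw [mulVec_single_one, ← hY] at hY'
    exact hY' ▸ rank_mul_le_left M Y'
  have hH' : ∀ k j, 0 ≤ (D * H) k j := fun k j => by
    rw [diagonal_mul]
    exact mul_nonneg (Finset.sum_nonneg fun i _ => hW i k) (hH k j)
  exact ⟨_, D * H, isRNMF_of_rank_le hW'.1 hH' hM' hrank', hW', hH',
    one_vecMul_eq_one_of_mul hW'.2 (hM' ▸ hM.2)⟩

end RestrictedNMF

section BackwardMatrix

variable {A S S' S'' : Type} [Fintype S] [DecidableEq S] [Fintype S'] [DecidableEq S']
  [Fintype S''] [DecidableEq S''] {μ : A → Matrix S S ℝ} {μ' : A → Matrix S' S' ℝ}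
  {μ'' : A → Matrix S'' S'' ℝ}

/-- The backward matrix `B_ℳ`, with one column per word. -/
noncomputable def lmcBackward (μ : A → Matrix S S ℝ) : Matrix S (List A) ℝ :=
  of (lmcB μ)

theorem lmcRank_eq_finrank_span_range_col (μ : A → Matrix S S ℝ) :
    lmcRank μ = Module.finrank ℝ (Submodule.span ℝ (Set.range (lmcBackward μ).col)) :=
  rfl

theorem lmcCovers_iff :
    lmcCovers μ' μ ↔
      ∃ C : Matrix S S' ℝ, IsRowStochastic C ∧ C * lmcBackward μ' = lmcBackward μ := by
  simp only [isRowStochastic_iff_sum, ← Matrix.ext_iff, and_assoc]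
  rfl

theorem lmcBackward_col (μ : A → Matrix S S ℝ) (w : List A) :
    (lmcBackward μ).col w = lmcWord μ w *ᵥ 1 := by
  ext i
  simp [lmcBackward, lmcB, mulVec, dotProduct]

theorem lmcBackward_col_nil (μ : A → Matrix S S ℝ) : (lmcBackward μ).col [] = 1 := by
  simp [lmcBackward_col, lmcWord]

theorem lmcBackward_col_cons (μ : A → Matrix S S ℝ) (a : A) (w : List A) :
    (lmcBackward μ).col (a :: w) = μ a *ᵥ (lmcBackward μ).col w := by
  simp [lmcBackward_col, lmcWord]

theorem lmcBackward_singleton (μ : A → Matrix S S ℝ) (i : S) (a : A) :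
    lmcBackward μ i [a] = ∑ j, μ a i j := by
  calc (lmcBackward μ).col [a] i
    _ = (μ a *ᵥ 1) i := by rw [lmcBackward_col_cons, lmcBackward_col_nil]
    _ = ∑ j, μ a i j := by simp [mulVec, dotProduct]

theorem mul_lmcBackward_of_intertwines {C : Matrix S S' ℝ} (hC : C *ᵥ 1 = 1)
    (hμ : ∀ a, C * μ' a = μ a * C) : C * lmcBackward μ' = lmcBackward μ := by
  refine Matrix.ext_col fun w => ?_
  change C *ᵥ (lmcBackward μ').col w = (lmcBackward μ).col w
  induction w with
  | nil => rw [lmcBackward_col_nil, hC, lmcBackward_col_nil]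
  | cons a w ih =>
    rw [lmcBackward_col_cons, mulVec_mulVec, hμ, ← mulVec_mulVec, ih, lmcBackward_col_cons]

theorem mul_lmcBackward_of_mul_eq {P : Matrix S S ℝ} (hP : P *ᵥ 1 = 1)
    (hμ : ∀ a, P * μ a = μ a) : P * lmcBackward μ = lmcBackward μ := by
  refine Matrix.ext_col fun w => ?_
  change P *ᵥ (lmcBackward μ).col w = (lmcBackward μ).col w
  cases w with
  | nil => rw [lmcBackward_col_nil, hP]
  | cons a w => rw [lmcBackward_col_cons, mulVec_mulVec, hμ]

theorem lmcCovers.trans (h : lmcCovers μ'' μ') (h' : lmcCovers μ' μ) : lmcCovers μ'' μ := by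
  rw [lmcCovers_iff] at *
  obtain ⟨C, hC, hCB⟩ := h
  obtain ⟨C', hC', hCB'⟩ := h'
  exact ⟨C' * C, hC'.mul hC, by rw [Matrix.mul_assoc, hCB, hCB']⟩

theorem lmcCovers.rank_le (h : lmcCovers μ' μ) : lmcRank μ ≤ lmcRank μ' := by
  obtain ⟨C, -, hC⟩ := lmcCovers_iff.mp h
  rw [lmcRank_eq_finrank_span_range_col, lmcRank_eq_finrank_span_range_col, ← hC]
  exact finrank_span_range_col_mul_le _ _

end BackwardMatrix

section Covering

variable {A S S' : Type} [Fintype S]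

theorem isLMC_of_nonneg_of_sum [Fintype A] {μ : A → Matrix S S ℝ} (hμ : ∀ a i j, 0 ≤ μ a i j)
    (hsum : ∀ i, ∑ a, ∑ j, μ a i j = 1) : IsLMC μ := by
  refine ⟨hμ, fun a i j => ?_, hsum⟩
  calc μ a i j
    _ ≤ ∑ j, μ a i j := Finset.single_le_sum (fun j _ => hμ a i j) (Finset.mem_univ j)
    _ ≤ ∑ a, ∑ j, μ a i j :=
      Finset.single_le_sum (f := fun a => ∑ j, μ a i j)
        (fun a _ => Finset.sum_nonneg fun j _ => hμ a i j) (Finset.mem_univ a)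
    _ = 1 := hsum i

theorem IsLMC.submatrix [Fintype A] [Fintype S'] {μ : A → Matrix S S ℝ} (hμ : IsLMC μ)
    (e : S' ≃ S) : IsLMC fun a => (μ a).submatrix e e :=
  ⟨fun a i j => hμ.1 a (e i) (e j), fun a i j => hμ.2.1 a (e i) (e j), fun i =>
    (Finset.sum_congr rfl fun a _ => e.sum_comp (μ a (e i))).trans (hμ.2.2 (e i))⟩

variable [DecidableEq S] [Fintype S'] [DecidableEq S']

theorem lmcCovers_submatrix (μ : A → Matrix S S ℝ) (e : S' ≃ S) :
    lmcCovers (fun a => (μ a).submatrix e e) μ := by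
  have hE : IsRowStochastic ((1 : Matrix S S ℝ).submatrix id e) :=
    isRowStochastic_iff_sum.mpr ⟨fun i k => zero_le_one_elem i (e k), fun i => by
      simp [Matrix.one_apply, e.sum_comp (fun j => if i = j then (1 : ℝ) else 0)]⟩
  refine lmcCovers_iff.mpr ⟨_, hE, mul_lmcBackward_of_intertwines hE.2 fun a => ?_⟩
  rw [submatrix_mul_equiv, Matrix.one_mul]
  simpa using (submatrix_mul (μ a) 1 id id e Function.bijective_id)

theorem lmcRank_submatrix (μ : A → Matrix S S ℝ) (e : S' ≃ S) :
    lmcRank (fun a => (μ a).submatrix e e) = lmcRank μ := by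
  refine le_antisymm ?_ (lmcCovers_submatrix μ e).rank_le
  simpa using (lmcCovers_submatrix (fun a => (μ a).submatrix e e) e.symm).rank_le

theorem eq_zero_or_eq_zero_of_mul_lmcBackward_eq [Fintype A] {μ : A → Matrix S S ℝ}
    {μ' : A → Matrix S' S' ℝ} (hμ' : IsLMC μ') {C : Matrix S S' ℝ} (hC : ∀ i l, 0 ≤ C i l)
    (hCB : C * lmcBackward μ' = lmcBackward μ) {s t : S}
    (hst : ∀ a, lmcBackward μ s [a] = 0 ∨ lmcBackward μ t [a] = 0) (l : S') :
    C s l = 0 ∨ C t l = 0 := by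
  have hB (l : S') (a : A) : 0 ≤ lmcBackward μ' l [a] := by
    rw [lmcBackward_singleton]
    exact Finset.sum_nonneg fun j _ => hμ'.1 a l j
  have hsupp {s : S} (hs : C s l ≠ 0) {a : A} (ha : lmcBackward μ s [a] = 0) :
      lmcBackward μ' l [a] = 0 := by
    rw [← hCB, Matrix.mul_apply, Finset.sum_eq_zero_iff_of_nonneg
      fun k _ => mul_nonneg (hC s k) (hB k a)] at ha
    exact (mul_eq_zero.mp (ha l (Finset.mem_univ l))).resolve_left hs
  by_contra! hne
  have hzero : ∑ a, lmcBackward μ' l [a] = 0 :=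
    Finset.sum_eq_zero fun a _ => (hst a).elim (hsupp hne.1) (hsupp hne.2)
  simp only [lmcBackward_singleton, hμ'.2.2 l, one_ne_zero] at hzero

end Covering

section FactorChain

/-- The chain a nonnegative factorization `W * H` gives rise to. As in `lmcMu`, there are an
initial state, one state per inner index and a final state; the letter `i` leads from the initial
state to the inner state `k` with probability `H k i / |β|`, and the letter `j` leads from `k` to
the final state with probability `W j k`. -/
noncomputable def factorChain {α β κ : Type} [Fintype β] (W : Matrix α κ ℝ) (H : Matrix κ β ℝ) :
    β ⊕ α ⊕ Unit → Matrix (Unit ⊕ κ ⊕ Unit) (Unit ⊕ κ ⊕ Unit) ℝ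
  | Sum.inl i => of fun p q =>
      match p, q with
      | Sum.inl _, Sum.inr (Sum.inl k) => H k i / Fintype.card β
      | _, _ => 0
  | Sum.inr (Sum.inl j) => of fun p q =>
      match p, q with
      | Sum.inr (Sum.inl k), Sum.inr (Sum.inr _) => W j k
      | _, _ => 0
  | Sum.inr (Sum.inr _) => of fun p q =>
      match p, q with
      | Sum.inr (Sum.inr _), Sum.inr (Sum.inr _) => 1
      | _, _ => 0

/-- The block diagonal matrix `diag(1, T, 1)`, which relates the states of two `factorChain`s. -/
def bordered {κ κ' : Type} (T : Matrix κ κ' ℝ) :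
    Matrix (Unit ⊕ κ ⊕ Unit) (Unit ⊕ κ' ⊕ Unit) ℝ :=
  fromBlocks 1 0 0 (fromBlocks T 0 0 1)

theorem lmcMu_eq_factorChain {n m : ℕ} (M : Matrix (Fin n) (Fin m) ℝ) :
    lmcMu M = factorChain M 1 := by
  funext a
  ext p q
  rcases a with i | j | _ <;> rcases p with _ | p | _ <;> rcases q with _ | q | _ <;>
    simp [lmcMu, factorChain, Matrix.one_apply, ite_div]

variable {α β κ κ' : Type}

theorem bordered_mul {κ'' : Type} [Fintype κ] (S : Matrix κ'' κ ℝ) (T : Matrix κ κ' ℝ) :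
    bordered (S * T) = bordered S * bordered T := by
  simp [bordered, fromBlocks_multiply]

theorem bordered_mulVec_one [Fintype κ'] {T : Matrix κ κ' ℝ} (hT : T *ᵥ 1 = 1) :
    bordered T *ᵥ 1 = 1 := by
  ext p
  rcases p with _ | k | _
  · simp [bordered, mulVec, dotProduct]
  · simpa [bordered, mulVec, dotProduct] using congrFun hT k
  · simp [bordered, mulVec, dotProduct]

theorem isRowStochastic_bordered [Fintype κ'] {T : Matrix κ κ' ℝ} (hT : IsRowStochastic T) :
    IsRowStochastic (bordered T) := by
  refine ⟨?_, bordered_mulVec_one hT.2⟩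
  rintro (_ | k | _) (_ | l | _) <;> simp [bordered, hT.1]

variable [Fintype β] [Fintype κ]

theorem bordered_transpose_mul_factorChain [Fintype κ'] (W : Matrix α κ ℝ) (T : Matrix κ κ' ℝ)
    (H : Matrix κ' β ℝ) (a : β ⊕ α ⊕ Unit) :
    bordered Tᵀ * factorChain W (T * H) a = factorChain (W * T) H a * bordered Tᵀ := by
  ext p q
  rcases a with i | j | _ <;> rcases p with _ | p | _ <;> rcases q with _ | q | _ <;>
    simp [factorChain, bordered, Matrix.mul_apply, mul_comm, Finset.sum_div, mul_div_assoc]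

theorem bordered_transpose_mul_factorChain_of_mul_eq {W : Matrix α κ ℝ} {P : Matrix κ κ ℝ}
    (hWP : W * P = W) (H : Matrix κ β ℝ) (a : β ⊕ α ⊕ Unit) :
    bordered Pᵀ * factorChain W H a = factorChain W H a := by
  have hWP' (j : α) (k : κ) : ∑ l, P l k * W j l = W j k := by
    simpa only [Matrix.mul_apply, mul_comm] using congrFun₂ hWP j k
  ext p q
  rcases a with i | j | _ <;> rcases p with _ | p | _ <;> rcases q with _ | q | _ <;>
    simp [factorChain, bordered, Matrix.mul_apply, hWP']

theorem isLMC_factorChain [Fintype α] [Nonempty β] {W : Matrix α κ ℝ} {H : Matrix κ β ℝ}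
    (hW : IsColStochastic W) (hH : IsColStochastic H) : IsLMC (factorChain W H) := by
  rw [isColStochastic_iff_sum] at hW hH
  refine isLMC_of_nonneg_of_sum ?_ ?_
  · have hHβ (k : κ) (i : β) : 0 ≤ H k i / Fintype.card β := div_nonneg (hH.1 k i) (by positivity)
    rintro (i | j | _) (_ | p | _) (_ | q | _) <;> simp [factorChain, hW.1, hHβ]
  · rintro (_ | p | _) <;> simp [factorChain, hW.2, ← Finset.sum_div, hH.2]

theorem bordered_transpose_mul_lmcBackward [DecidableEq β] [DecidableEq κ] (W : Matrix α κ ℝ)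
    {H : Matrix κ β ℝ} (hH : IsColStochastic H) :
    bordered Hᵀ * lmcBackward (factorChain W H) = lmcBackward (factorChain (W * H) 1) := by
  refine mul_lmcBackward_of_intertwines (bordered_mulVec_one hH.transpose.2) fun a => ?_
  simpa only [Matrix.mul_one] using bordered_transpose_mul_factorChain W H 1 a

theorem lmcCovers_factorChain [DecidableEq β] [DecidableEq κ] (W : Matrix α κ ℝ)
    {H : Matrix κ β ℝ} (hH : IsColStochastic H) :
    lmcCovers (factorChain W H) (factorChain (W * H) 1) :=
  lmcCovers_iff.mpr ⟨bordered Hᵀ, isRowStochastic_bordered hH.transpose,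
    bordered_transpose_mul_lmcBackward W hH⟩

theorem lmcRank_factorChain [Fintype α] [DecidableEq β] [DecidableEq κ] {W : Matrix α κ ℝ}
    {H : Matrix κ β ℝ} (hW : IsColStochastic W) (hH : IsColStochastic H)
    (hrank : W.rank = (W * H).rank) :
    lmcRank (factorChain W H) = lmcRank (factorChain (W * H) (1 : Matrix β β ℝ)) := by
  refine le_antisymm ?_ (lmcCovers_factorChain W hH).rank_le
  obtain ⟨Y, hY⟩ := exists_eq_mul_of_rank_eq hrank
  have hWP : W * (H * Y) = W := by rw [← Matrix.mul_assoc, ← hY]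
  have hP : (H * Y)ᵀ *ᵥ 1 = 1 := by
    rw [mulVec_transpose]
    exact one_vecMul_eq_one_of_mul hW.2 (hWP.symm ▸ hW.2)
  have hfix : bordered (H * Y)ᵀ * lmcBackward (factorChain W H) = lmcBackward (factorChain W H) :=
    mul_lmcBackward_of_mul_eq (bordered_mulVec_one hP)
      (bordered_transpose_mul_factorChain_of_mul_eq hWP H)
  rw [transpose_mul, bordered_mul, Matrix.mul_assoc, bordered_transpose_mul_lmcBackward W hH]
    at hfix
  rw [lmcRank_eq_finrank_span_range_col, ← hfix, lmcRank_eq_finrank_span_range_col]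
  exact finrank_span_range_col_mul_le _ _

end FactorChain

section CoverToFactorization

variable {α β S' : Type} [Fintype α] [Fintype β] [DecidableEq β] [Fintype S'] [DecidableEq S']
  {M : Matrix α β ℝ} {μ' : β ⊕ α ⊕ Unit → Matrix S' S' ℝ}
  {C : Matrix (Unit ⊕ β ⊕ Unit) S' ℝ}

theorem isRNMF_of_mul_lmcBackward_eq (hμ' : IsLMC μ') (hC : ∀ p l, 0 ≤ C p l)
    (hCB : C * lmcBackward μ' = lmcBackward (factorChain M 1))
    (hrank : lmcRank μ' = lmcRank (factorChain M (1 : Matrix β β ℝ))) :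
    IsRNMF M (of fun j l => lmcBackward μ' l [Sum.inr (Sum.inl j)])
      (of fun l i => C (Sum.inr (Sum.inl i)) l) := by
  rw [lmcRank_eq_finrank_span_range_col, lmcRank_eq_finrank_span_range_col, ← hCB] at hrank
  obtain ⟨X, hX⟩ := exists_mul_mul_eq_of_finrank_span_range_col_eq hrank.symm
  rw [hCB] at hX
  have hB (p : Unit ⊕ β ⊕ Unit) (j : α) :
      lmcBackward (factorChain M (1 : Matrix β β ℝ)) p [Sum.inr (Sum.inl j)] =
        Sum.elim (0 : Unit → ℝ) (Sum.elim (M j) (0 : Unit → ℝ)) p := by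
    rcases p with _ | i | _ <;> simp [lmcBackward_singleton, factorChain]
  have hfactor : of (fun j l => lmcBackward μ' l [Sum.inr (Sum.inl j)]) =
      M * of fun i l => X l (Sum.inr (Sum.inl i)) := by
    ext j l
    rw [of_apply, ← hX, Matrix.mul_apply, Matrix.mul_apply]
    simp [hB, mul_comm]
  refine isRNMF_of_rank_le (fun j l => ?_) (fun l i => hC _ l) ?_
    (hfactor ▸ rank_mul_le_left M _)
  · rw [of_apply, lmcBackward_singleton]
    exact Finset.sum_nonneg fun q _ => hμ'.1 _ l q
  · ext j i
    calc M j i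
      _ = (C * lmcBackward μ') (Sum.inr (Sum.inl i)) [Sum.inr (Sum.inl j)] := by rw [hCB, hB]; rfl
      _ = _ := by simp [Matrix.mul_apply, mul_comm]

theorem exists_ne_and_forall_eq_zero_of_mul_lmcBackward_eq (hμ' : IsLMC μ')
    (hC : IsRowStochastic C) (hCB : C * lmcBackward μ' = lmcBackward (factorChain M 1)) :
    ∃ l₀ l₁, l₀ ≠ l₁ ∧ ∀ i, C (Sum.inr (Sum.inl i)) l₀ = 0 ∧ C (Sum.inr (Sum.inl i)) l₁ = 0 := by
  let B := lmcBackward (factorChain M (1 : Matrix β β ℝ))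
  have hdisj {p q : Unit ⊕ β ⊕ Unit} (h : ∀ a, B p [a] = 0 ∨ B q [a] = 0) (l : S') :
      C p l = 0 ∨ C q l = 0 :=
    eq_zero_or_eq_zero_of_mul_lmcBackward_eq hμ' hC.1 hCB h l
  have hinit_final (a) : B (Sum.inl ()) [a] = 0 ∨ B (Sum.inr (Sum.inr ())) [a] = 0 := by
    rcases a with i | j | _ <;> simp [B, lmcBackward_singleton, factorChain]
  have hinit_inner (i : β) (a) : B (Sum.inl ()) [a] = 0 ∨ B (Sum.inr (Sum.inl i)) [a] = 0 := by
    rcases a with i | j | _ <;> simp [B, lmcBackward_singleton, factorChain]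
  have hfinal_inner (i : β) (a) :
      B (Sum.inr (Sum.inr ())) [a] = 0 ∨ B (Sum.inr (Sum.inl i)) [a] = 0 := by
    rcases a with i | j | _ <;> simp [B, lmcBackward_singleton, factorChain]
  obtain ⟨l₀, hl₀⟩ := hC.exists_ne_zero (Sum.inl ())
  obtain ⟨l₁, hl₁⟩ := hC.exists_ne_zero (Sum.inr (Sum.inr ()))
  refine ⟨l₀, l₁, ?_, fun i => ⟨(hdisj (hinit_inner i) l₀).resolve_left hl₀,
    (hdisj (hfinal_inner i) l₁).resolve_left hl₁⟩⟩
  rintro rfl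
  exact (hdisj hinit_final l₀).elim hl₀ hl₁

end CoverToFactorization

section Equivalence

variable {n m : ℕ} {M : Matrix (Fin n) (Fin m) ℝ}

theorem rrkPos_le_iff_exists_isRNMF (hM : ∀ j i, 0 ≤ M j i) {d : ℕ} :
    rrkPos M ≤ d ↔ ∃ (W : Matrix (Fin n) (Fin d) ℝ) (H : Matrix (Fin d) (Fin m) ℝ),
      IsRNMF M W H := by
  refine ⟨fun hd => ?_, fun h => Nat.sInf_le h⟩
  have htrivial : IsRNMF M M 1 :=
    isRNMF_of_rank_le hM zero_le_one_elem (Matrix.mul_one M).symm le_rfl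
  obtain ⟨W, H, h⟩ : ∃ (W : Matrix (Fin n) (Fin (rrkPos M)) ℝ)
      (H : Matrix (Fin (rrkPos M)) (Fin m) ℝ), IsRNMF M W H :=
    Nat.sInf_mem (s := {d : ℕ | ∃ (W : Matrix (Fin n) (Fin d) ℝ) (H : Matrix (Fin d) (Fin m) ℝ),
      IsRNMF M W H}) ⟨m, M, 1, htrivial⟩
  exact h.exists_of_embedding (Fin.castLEEmb hd)

theorem IsRNMF.exists_lmcCovers {d : ℕ} [NeZero m] {W : Matrix (Fin n) (Fin d) ℝ}
    {H : Matrix (Fin d) (Fin m) ℝ} (h : IsRNMF M W H) (hM : IsColStochastic M) :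
    ∃ μ' : (Fin m ⊕ Fin n ⊕ Unit) → Matrix (Fin (d + 2)) (Fin (d + 2)) ℝ,
      IsLMC μ' ∧ lmcCovers μ' (lmcMu M) ∧ lmcRank μ' = lmcRank (lmcMu M) := by
  obtain ⟨W', H', ⟨-, -, hMWH, hrank⟩, hW', hH'⟩ := h.exists_isColStochastic hM
  subst hMWH
  let e : Fin (d + 2) ≃ Unit ⊕ Fin d ⊕ Unit := Fintype.equivOfCardEq (by simp; omega)
  rw [lmcMu_eq_factorChain]
  exact ⟨fun a => (factorChain W' H' a).submatrix e e, (isLMC_factorChain hW' hH').submatrix e,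
    (lmcCovers_submatrix _ e).trans (lmcCovers_factorChain W' hH'),
    (lmcRank_submatrix _ e).trans (lmcRank_factorChain hW' hH' hrank)⟩

theorem lmcCovers.exists_isRNMF {d : ℕ}
    {μ' : (Fin m ⊕ Fin n ⊕ Unit) → Matrix (Fin (d + 2)) (Fin (d + 2)) ℝ} (hμ' : IsLMC μ')
    (hcov : lmcCovers μ' (lmcMu M)) (hrank : lmcRank μ' = lmcRank (lmcMu M)) :
    ∃ (W : Matrix (Fin n) (Fin d) ℝ) (H : Matrix (Fin d) (Fin m) ℝ), IsRNMF M W H := by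
  rw [lmcMu_eq_factorChain] at hcov hrank
  obtain ⟨C, hC, hCB⟩ := lmcCovers_iff.mp hcov
  obtain ⟨l₀, l₁, hne, hzero⟩ := exists_ne_and_forall_eq_zero_of_mul_lmcBackward_eq hμ' hC hCB
  have hcard : ({l₀, l₁}ᶜ : Finset (Fin (d + 2))).card = d := by
    rw [Finset.card_compl, Finset.card_pair hne, Fintype.card_fin, Nat.add_sub_cancel]
  refine ⟨_, _, (isRNMF_of_mul_lmcBackward_eq hμ' hC.1 hCB hrank).submatrix
    (Finset.orderEmbOfFin _ hcard).toEmbedding fun l hl => ?_⟩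
  have hl' : l = l₀ ∨ l = l₁ := by
    by_contra! hl'
    exact hl (by simp [hl'])
  ext i
  rcases hl' with rfl | rfl
  exacts [(hzero i).1, (hzero i).2]

theorem stmt8_general {n m : ℕ} (M : Matrix (Fin n) (Fin m) ℝ) (hMnn : ∀ j i, 0 ≤ M j i)
    (hMne : M ≠ 0) (hMcs : ∀ i, ∑ j, M j i = 1) (d : ℕ) :
    rrkPos M ≤ d ↔
      ∃ μ' : (Fin m ⊕ Fin n ⊕ Unit) → Matrix (Fin (d + 2)) (Fin (d + 2)) ℝ,
        IsLMC μ' ∧ lmcCovers μ' (lmcMu M) ∧ lmcRank μ' = lmcRank (lmcMu M) := by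
  have : NeZero m := ⟨by rintro rfl; exact hMne (Subsingleton.elim _ _)⟩
  rw [rrkPos_le_iff_exists_isRNMF hMnn]
  constructor
  · rintro ⟨W, H, h⟩
    exact h.exists_lmcCovers (isColStochastic_iff_sum.mpr ⟨hMnn, hMcs⟩)
  · rintro ⟨μ', hμ', hcov, hrank⟩
    exact hcov.exists_isRNMF hμ' hrank

end Equivalence

/-- Let `M ∈ ℚ_+^{n×m}` be nonzero and column-stochastic and `ℳ` the LMC constructed
from it. For every positive `d`: `rrk+(M) ≤ d` iff there is an LMC `ℳ'` with `d+2`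
states over the same alphabet that covers `ℳ` and satisfies `rk(ℳ') = rk(ℳ)`. -/
theorem stmt8 {n m : ℕ}
    (M : Matrix (Fin n) (Fin m) ℚ)
    (hMnn : ∀ j i, 0 ≤ M j i) (hMne : M ≠ 0) (hMcs : ∀ i : Fin m, ∑ j, M j i = 1)
    (d : ℕ) (hd : 0 < d) :
    rrkPos (M.map ((↑) : ℚ → ℝ)) ≤ d ↔
      ∃ μ' : (Fin m ⊕ Fin n ⊕ Unit) → Matrix (Fin (d + 2)) (Fin (d + 2)) ℝ,
        IsLMC μ' ∧ lmcCovers μ' (lmcMu (M.map ((↑) : ℚ → ℝ))) ∧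
        lmcRank μ' = lmcRank (lmcMu (M.map ((↑) : ℚ → ℝ))) := by
  refine stmt8_general _ (fun j i => by simpa using hMnn j i) (fun h => hMne ?_) (fun i => ?_) d
  · exact map_injective Rat.cast_injective (h.trans (Matrix.map_zero _ Rat.cast_zero).symm)
  · simpa using congrArg ((↑) : ℚ → ℝ) (hMcs i)
end

section
/- There exist a finite alphabet Σ, an LMC ℳ with 10 states over Σ, and an LMC ℳ' with 8 states over Σ, such that ℳ' covers ℳ, but there is no LMC ℳ* over Σ with fewer than 10 states that covers ℳ and satisfies rk(ℳ*) = rk(ℳ). (This answers Paz's 1971 question negatively.) -/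
open Matrix

/-! Two facts pull in opposite directions. A chain that emits a letter according to a row-stochastic
matrix `P` and then restarts is covered by a chain with one state per letter. On the other hand, a
cover of equal rank has a backward matrix with the same row space, so its rows lie in the affine
hull of the rows of the covered chain; such a nonnegative cover can produce a row only from rows
with at least the same zeros, so if the zeros of every row determine it inside the affine hull, each
row must itself occur in the cover. It remains to take for `P` the slack matrix of a polytope with
more vertices than facets: the zeros of a slack row name the facets through a vertex. -/

section LinearAlgebra

variable {K S S' W : Type*} [Field K] [Fintype S] [Fintype S']

theorem exists_mul_eq_of_mul_eq_of_finrank_span_col_eq {B : Matrix S W K} {B' : Matrix S' W K}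
    {C : Matrix S S' K} (hC : C * B' = B)
    (hrank : Module.finrank K (Submodule.span K (Set.range B'.col)) =
      Module.finrank K (Submodule.span K (Set.range B.col))) :
    ∃ D : Matrix S' S K, D * B = B' := by
  classical
  set V := Submodule.span K (Set.range B'.col)
  have hcol (w : W) : C *ᵥ B'.col w = B.col w := by
    rw [← hC]
    rfl
  have hrange : LinearMap.range (C.mulVecLin.domRestrict V) =
      Submodule.span K (Set.range B.col) := by
    rw [LinearMap.range_domRestrict, Submodule.map_span, ← Set.range_comp]
    exact congrArg (fun c => Submodule.span K (Set.range c)) (funext hcol)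
  have hker : LinearMap.ker (C.mulVecLin.domRestrict V) = ⊥ := by
    have hdim := LinearMap.finrank_range_add_finrank_ker (C.mulVecLin.domRestrict V)
    rw [hrange, ← hrank] at hdim
    exact Submodule.finrank_eq_zero.mp (by omega)
  obtain ⟨g, hg⟩ := LinearMap.exists_leftInverse_of_injective _ hker
  refine ⟨LinearMap.toMatrix' (V.subtype ∘ₗ g), ?_⟩
  ext l w
  let b : V := ⟨B'.col w, Submodule.subset_span ⟨w, rfl⟩⟩
  have hgb : g (B.col w) = b := by
    rw [← hcol w]
    exact LinearMap.congr_fun hg b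
  have hDw : LinearMap.toMatrix' (V.subtype ∘ₗ g) *ᵥ B.col w = B'.col w := by
    rw [LinearMap.toMatrix'_mulVec, LinearMap.comp_apply, hgb]
    rfl
  exact congrFun hDw l

end LinearAlgebra

section BackwardMatrix

variable {A S S' : Type} [Fintype S] [DecidableEq S] [Fintype S'] [DecidableEq S']
  {μ : A → Matrix S S ℝ} {μ' : A → Matrix S' S' ℝ}

theorem lmcB_nil (μ : A → Matrix S S ℝ) (i : S) : lmcB μ i [] = 1 := by
  simp [lmcB, lmcWord, Matrix.one_apply]

theorem lmcB_cons (μ : A → Matrix S S ℝ) (i : S) (a : A) (w : List A) :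
    lmcB μ i (a :: w) = ∑ j, μ a i j * lmcB μ j w := by
  simp only [lmcB, lmcWord, List.map_cons, List.prod_cons, Matrix.mul_apply, Finset.mul_sum]
  exact Finset.sum_comm

theorem lmcB_nonneg (hμ : ∀ a i j, 0 ≤ μ a i j) (i : S) (w : List A) : 0 ≤ lmcB μ i w := by
  induction w generalizing i with
  | nil => exact (lmcB_nil μ i).symm ▸ zero_le_one
  | cons a w ih =>
    rw [lmcB_cons]
    exact Finset.sum_nonneg fun j _ => mul_nonneg (hμ a i j) (ih j)

theorem exists_mul_lmcB_eq_of_lmcCovers (hcov : lmcCovers μ' μ)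
    (hrank : lmcRank μ' = lmcRank μ) :
    ∃ D : Matrix S' S ℝ, D * Matrix.of (lmcB μ) = Matrix.of (lmcB μ') := by
  obtain ⟨C, -, -, hC⟩ := hcov
  exact exists_mul_eq_of_mul_eq_of_finrank_span_col_eq (C := Matrix.of C)
    (Matrix.ext hC) hrank

end BackwardMatrix

section VertexRows

/-- Every row of `P` is a vertex of the polyhedron that the nonnegative orthant cuts out of the
affine hull of the rows: it is the only point of the affine hull that vanishes wherever it does.
This is what makes rows indispensable in a cover of equal rank. -/
def HasVertexRows {S W : Type*} [Fintype S] (P : Matrix S W ℝ) : Prop :=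
  ∀ (i : S) (d : S → ℝ), ∑ j, d j = 1 → (∀ x, P i x = 0 → (d ᵥ* P) x = 0) → d ᵥ* P = P i

variable {A S S' : Type} [Fintype S] [DecidableEq S] [Fintype S'] [DecidableEq S']
  {μ : A → Matrix S S ℝ} {μ' : A → Matrix S' S' ℝ}

theorem exists_forall_lmcB_eq_zero_of_lmcCovers (hμ' : ∀ a i j, 0 ≤ μ' a i j)
    (hcov : lmcCovers μ' μ) (i : S) :
    ∃ l, ∀ w, lmcB μ i w = 0 → lmcB μ' l w = 0 := by
  obtain ⟨C, hC0, hC1, hC⟩ := hcov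
  obtain ⟨l, -, hl⟩ : ∃ l ∈ Finset.univ, C i l ≠ 0 :=
    Finset.exists_ne_zero_of_sum_ne_zero (by rw [hC1 i]; exact one_ne_zero)
  refine ⟨l, fun w hw => ?_⟩
  have hterms := (Finset.sum_eq_zero_iff_of_nonneg fun m _ =>
    mul_nonneg (hC0 i m) (lmcB_nonneg hμ' m w)).mp ((hC i w).trans hw)
  exact (mul_eq_zero.mp (hterms l (Finset.mem_univ l))).resolve_left hl

theorem card_le_card_of_lmcCovers_of_lmcRank_eq {W : Type*} (u : W → List A)
    (hvertex : HasVertexRows (Matrix.of fun i x => lmcB μ i (u x)))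
    (hinj : Function.Injective fun i x => lmcB μ i (u x))
    (hμ' : ∀ a i j, 0 ≤ μ' a i j) (hcov : lmcCovers μ' μ) (hrank : lmcRank μ' = lmcRank μ) :
    Fintype.card S ≤ Fintype.card S' := by
  obtain ⟨D, hD⟩ := exists_mul_lmcB_eq_of_lmcCovers hcov hrank
  have hrow (l : S') (w : List A) : ∑ i, D l i * lmcB μ i w = lmcB μ' l w :=
    congrFun (congrFun hD l) w
  have hDsum (l : S') : ∑ i, D l i = 1 := by
    simpa only [lmcB_nil, mul_one] using hrow l []
  choose φ hφ using exists_forall_lmcB_eq_zero_of_lmcCovers hμ' hcov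
  have hφ_row (i : S) : (fun x => lmcB μ' (φ i) (u x)) = fun x => lmcB μ i (u x) :=
    calc (fun x => lmcB μ' (φ i) (u x))
        = D (φ i) ᵥ* Matrix.of fun i x => lmcB μ i (u x) := funext fun x => (hrow _ _).symm
      _ = fun x => lmcB μ i (u x) := hvertex i _ (hDsum _) fun x hx =>
          (hrow _ _).trans (hφ i (u x) hx)
  refine Fintype.card_le_of_injective φ fun i j hij => hinj ?_
  simp only [← hφ_row, hij]

end VertexRows

section RestartChain

variable {A S S' : Type} [Fintype S] [Fintype S']

/-- The chain that in state `i` emits a letter with distribution `P i` and then restarts from a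
state drawn from `r`, independently of the past. -/
def restartChain (P : Matrix S A ℝ) (r : S → ℝ) (a : A) : Matrix S S ℝ :=
  vecMulVec (P.col a) r

theorem isLMC_restartChain [Fintype A] {P : Matrix S A ℝ} {r : S → ℝ}
    (hP : ∀ i, P i ∈ stdSimplex ℝ A) (hr : r ∈ stdSimplex ℝ S) : IsLMC (restartChain P r) := by
  refine ⟨fun a i j => mul_nonneg ((hP i).1 a) (hr.1 j), fun a i j => ?_, fun i => ?_⟩
  · exact mul_le_one₀ (mem_Icc_of_mem_stdSimplex (hP i) a).2 (hr.1 j)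
      (mem_Icc_of_mem_stdSimplex hr j).2
  · simp only [restartChain, vecMulVec_apply, col_apply, ← Finset.mul_sum, hr.2, mul_one,
      (hP i).2]

variable [DecidableEq S] [DecidableEq S']

theorem one_row_mem_stdSimplex (i : S) : (1 : Matrix S S ℝ) i ∈ stdSimplex ℝ S := by
  have hrow : (1 : Matrix S S ℝ) i = Pi.single i 1 := funext fun _ => one_eq_pi_single
  exact hrow ▸ single_mem_stdSimplex ℝ i

theorem lmcB_restartChain_cons (P : Matrix S A ℝ) (r : S → ℝ) (i : S) (a : A) (w : List A) :
    lmcB (restartChain P r) i (a :: w) = P i a * ∑ j, r j * lmcB (restartChain P r) j w := by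
  simp only [lmcB_cons, restartChain, vecMulVec_apply, col_apply, mul_assoc, Finset.mul_sum]

theorem lmcB_restartChain_singleton {r : S → ℝ} (hr : ∑ j, r j = 1) (P : Matrix S A ℝ) (i : S)
    (a : A) : lmcB (restartChain P r) i [a] = P i a := by
  simp only [lmcB_restartChain_cons, lmcB_nil, mul_one, hr]

theorem lmcCovers_restartChain_mul {C : Matrix S S' ℝ} (hC : ∀ i, C i ∈ stdSimplex ℝ S')
    (Q : Matrix S' A ℝ) (r : S → ℝ) :
    lmcCovers (restartChain Q (r ᵥ* C)) (restartChain (C * Q) r) := by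
  refine ⟨C, fun i => (hC i).1, fun i => (hC i).2, fun i w => ?_⟩
  induction w generalizing i with
  | nil => simp only [lmcB_nil, mul_one, (hC i).2]
  | cons a w ih =>
    set B' : S' → ℝ := fun l => lmcB (restartChain Q (r ᵥ* C)) l w
    have hrestart : (r ᵥ* C) ⬝ᵥ B' = ∑ j, r j * lmcB (restartChain (C * Q) r) j w := by
      rw [← dotProduct_mulVec]
      exact Finset.sum_congr rfl fun j _ => congrArg (r j * ·) (ih j)
    calc ∑ l, C i l * lmcB (restartChain Q (r ᵥ* C)) l (a :: w)
        = ∑ l, C i l * (Q l a * ((r ᵥ* C) ⬝ᵥ B')) := by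
          simp only [lmcB_restartChain_cons]; rfl
      _ = (C * Q) i a * ((r ᵥ* C) ⬝ᵥ B') := by
          simp only [← mul_assoc, ← Finset.sum_mul, mul_apply]
      _ = lmcB (restartChain (C * Q) r) i (a :: w) := by
          rw [hrestart, lmcB_restartChain_cons]

theorem card_le_card_of_lmcCovers_restartChain {P : Matrix S A ℝ} {r : S → ℝ}
    (hr : ∑ j, r j = 1) (hvertex : HasVertexRows P) (hinj : Function.Injective P)
    {μ' : A → Matrix S' S' ℝ} (hμ' : ∀ a i j, 0 ≤ μ' a i j)
    (hcov : lmcCovers μ' (restartChain P r)) (hrank : lmcRank μ' = lmcRank (restartChain P r)) :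
    Fintype.card S ≤ Fintype.card S' := by
  have hletter : (fun i a => lmcB (restartChain P r) i [a]) = P :=
    funext₂ fun i a => lmcB_restartChain_singleton hr P i a
  refine card_le_card_of_lmcCovers_of_lmcRank_eq (fun a => [a]) ?_ ?_ hμ' hcov hrank
  · rw [hletter]
    exact hvertex
  · rwa [hletter]

end RestartChain

section TruncatedCube

/-- The vertices of the cube `[0, 2]³` truncated by `x + y + z ≤ 5`; they are kept in `ℕ` so that
statements about all of them are decidable. -/
def truncatedCubeVertex : Fin 10 → Fin 3 → ℕ :=
  ![![0, 0, 0], ![2, 0, 0], ![0, 2, 0], ![0, 0, 2], ![2, 2, 0], ![2, 0, 2], ![0, 2, 2],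
    ![1, 2, 2], ![2, 1, 2], ![2, 2, 1]]

/-- The slacks of a point in the seven facet inequalities of the truncated cube, with an eighth
entry and a factor that make the entries sum to `1`. -/
noncomputable def truncatedCubeSlack (x : Fin 3 → ℝ) : Fin 8 → ℝ :=
  (11 : ℝ)⁻¹ • ![x 0, x 1, x 2, 2 - x 0, 2 - x 1, 2 - x 2, 5 - ∑ k, x k, ∑ k, x k]

/-- The slack matrix of the truncated cube, which serves as the emission matrix of the example. -/
noncomputable def truncatedCubeSlackMatrix : Matrix (Fin 10) (Fin 8) ℝ :=
  fun i => truncatedCubeSlack fun k => truncatedCubeVertex i k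

theorem truncatedCubeSlack_mem_stdSimplex {x : Fin 3 → ℝ} (hx : ∀ k, x k ∈ Set.Icc 0 2)
    (hsum : ∑ k, x k ≤ 5) : truncatedCubeSlack x ∈ stdSimplex ℝ (Fin 8) := by
  have hx_nonneg (k : Fin 3) : 0 ≤ x k := (hx k).1
  have hx_le (k : Fin 3) : x k ≤ 2 := (hx k).2
  constructor
  · intro a
    fin_cases a <;> simp [truncatedCubeSlack, hx_nonneg, hx_le, hsum, Finset.sum_nonneg]
  · calc ∑ a, truncatedCubeSlack x a = (11 : ℝ)⁻¹ * (x 0 + x 1 + x 2 + (2 - x 0) + (2 - x 1) +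
          (2 - x 2) + (5 - ∑ k, x k) + ∑ k, x k) := by
          simp [truncatedCubeSlack, ← Finset.mul_sum, Fin.sum_univ_eight]
      _ = 1 := by ring

theorem truncatedCubeSlackMatrix_mem_stdSimplex (i : Fin 10) :
    truncatedCubeSlackMatrix i ∈ stdSimplex ℝ (Fin 8) := by
  have hcoord : ∀ i k, truncatedCubeVertex i k ≤ 2 := by decide
  have hsum : ∀ i, ∑ k, truncatedCubeVertex i k ≤ 5 := by decide
  exact truncatedCubeSlack_mem_stdSimplex
    (fun k => ⟨Nat.cast_nonneg _, mod_cast hcoord i k⟩) (mod_cast hsum i)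

theorem truncatedCubeSlack_injective : Function.Injective truncatedCubeSlack := by
  intro x y hxy
  have hcoord (k : Fin 3) : x k = y k := by
    fin_cases k
    · simpa [truncatedCubeSlack] using congrFun hxy 0
    · simpa [truncatedCubeSlack] using congrFun hxy 1
    · simpa [truncatedCubeSlack] using congrFun hxy 2
  exact funext hcoord

theorem truncatedCubeSlackMatrix_injective : Function.Injective truncatedCubeSlackMatrix := by
  have hvertex : Function.Injective truncatedCubeVertex := by decide
  exact truncatedCubeSlack_injective.comp fun i j hij =>
    hvertex (funext fun k => Nat.cast_injective (congrFun hij k))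

theorem vecMul_truncatedCubeSlack {S : Type*} [Fintype S] (x : S → Fin 3 → ℝ) {d : S → ℝ}
    (hd : ∑ i, d i = 1) :
    (d ᵥ* fun i => truncatedCubeSlack (x i)) = truncatedCubeSlack (d ᵥ* x) := by
  ext a
  fin_cases a <;>
    simp [truncatedCubeSlack, vecMul, dotProduct, Fin.sum_univ_three, mul_left_comm _ (11⁻¹ : ℝ),
      ← Finset.mul_sum, mul_sub, mul_add, Finset.sum_sub_distrib, Finset.sum_add_distrib,
      ← Finset.sum_mul, hd]

theorem facets_of_truncatedCubeSlack_eq_zero {x y : Fin 3 → ℝ}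
    (h : ∀ a, truncatedCubeSlack x a = 0 → truncatedCubeSlack y a = 0) :
    (∀ k, x k = 0 → y k = 0) ∧ (∀ k, x k = 2 → y k = 2) ∧ (∑ k, x k = 5 → ∑ k, y k = 5) := by
  refine ⟨fun k => ?_, fun k => ?_, ?_⟩
  · fin_cases k
    · simpa [truncatedCubeSlack] using h 0
    · simpa [truncatedCubeSlack] using h 1
    · simpa [truncatedCubeSlack] using h 2
  · fin_cases k
    · simpa [truncatedCubeSlack, sub_eq_zero, eq_comm (a := (2 : ℝ))] using h 3
    · simpa [truncatedCubeSlack, sub_eq_zero, eq_comm (a := (2 : ℝ))] using h 4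
    · simpa [truncatedCubeSlack, sub_eq_zero, eq_comm (a := (2 : ℝ))] using h 5
  · simpa [truncatedCubeSlack, sub_eq_zero, eq_comm (a := (5 : ℝ))] using h 6

theorem eq_truncatedCubeVertex_of_slack_eq_zero (i : Fin 10) {y : Fin 3 → ℝ}
    (hy : ∀ a, truncatedCubeSlackMatrix i a = 0 → truncatedCubeSlack y a = 0) :
    y = fun k => (truncatedCubeVertex i k : ℝ) := by
  have hthree_facets : ∀ i, ∃ k,
      (∀ l ≠ k, truncatedCubeVertex i l = 0 ∨ truncatedCubeVertex i l = 2) ∧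
      (truncatedCubeVertex i k = 0 ∨ truncatedCubeVertex i k = 2 ∨
        ∑ l, truncatedCubeVertex i l = 5) := by decide
  obtain ⟨hlower, hupper, hcut⟩ := facets_of_truncatedCubeSlack_eq_zero hy
  have hcube (l : Fin 3) (hl : truncatedCubeVertex i l = 0 ∨ truncatedCubeVertex i l = 2) :
      y l = truncatedCubeVertex i l := by
    rcases hl with hl | hl
    · rw [hlower l (mod_cast hl), hl, Nat.cast_zero]
    · rw [hupper l (mod_cast hl), hl, Nat.cast_ofNat]
  obtain ⟨k, hother, hk⟩ := hthree_facets i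
  have hy_other (l : Fin 3) (hl : l ≠ k) := hcube l (hother l hl)
  have hy_k : y k = truncatedCubeVertex i k := by
    rcases hk with hk | hk | hk
    · exact hcube k (.inl hk)
    · exact hcube k (.inr hk)
    · have hsum : ∑ l, (truncatedCubeVertex i l : ℝ) = 5 := mod_cast hk
      have hy_sum := (hcut hsum).trans hsum.symm
      rw [Fintype.sum_eq_add_sum_compl k, Fintype.sum_eq_add_sum_compl k,
        Finset.sum_congr rfl fun l hl => hy_other l (by simpa using hl)] at hy_sum
      exact add_right_cancel hy_sum
  ext l
  exact (eq_or_ne l k).elim (fun hl => hl ▸ hy_k) (hy_other l)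

theorem hasVertexRows_truncatedCubeSlackMatrix : HasVertexRows truncatedCubeSlackMatrix := by
  intro i d hd hzero
  have hslack : d ᵥ* truncatedCubeSlackMatrix = truncatedCubeSlack (d ᵥ* _) :=
    vecMul_truncatedCubeSlack _ hd
  rw [hslack] at hzero ⊢
  exact congrArg truncatedCubeSlack (eq_truncatedCubeVertex_of_slack_eq_zero i hzero)

end TruncatedCube

/-- Negative answer to Paz's 1971 question: there are a finite alphabet `Σ`, an LMC `ℳ`
with 10 states and an LMC `ℳ'` with 8 states over `Σ` such that `ℳ'` covers `ℳ`, yet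
no LMC `ℳ*` over `Σ` with fewer than 10 states covers `ℳ` while having the same rank
as `ℳ`. -/
theorem stmt9 :
    ∃ (σ : ℕ) (μ : Fin σ → Matrix (Fin 10) (Fin 10) ℝ)
      (μ' : Fin σ → Matrix (Fin 8) (Fin 8) ℝ),
      IsLMC μ ∧ IsLMC μ' ∧ lmcCovers μ' μ ∧
      ¬ ∃ (k : ℕ), k < 10 ∧ ∃ μs : Fin σ → Matrix (Fin k) (Fin k) ℝ,
          IsLMC μs ∧ lmcCovers μs μ ∧ lmcRank μs = lmcRank μ := by
  let P := truncatedCubeSlackMatrix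
  let r : Fin 10 → ℝ := Pi.single 0 1
  have hP : ∀ i, P i ∈ stdSimplex ℝ (Fin 8) := truncatedCubeSlackMatrix_mem_stdSimplex
  have hr : r ∈ stdSimplex ℝ (Fin 10) := single_mem_stdSimplex ℝ 0
  have hrP : r ᵥ* P = P 0 := single_one_vecMul 0 P
  refine ⟨8, restartChain P r, restartChain 1 (P 0), isLMC_restartChain hP hr,
    isLMC_restartChain one_row_mem_stdSimplex (hP 0), ?_, ?_⟩
  · simpa only [hrP, Matrix.mul_one] using
      lmcCovers_restartChain_mul hP (1 : Matrix (Fin 8) (Fin 8) ℝ) r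
  · rintro ⟨k, hk, μs, hμs, hcov, hrank⟩
    have hcard := card_le_card_of_lmcCovers_restartChain hr.2
      hasVertexRows_truncatedCubeSlackMatrix truncatedCubeSlackMatrix_injective hμs.1 hcov hrank
    simp only [Fintype.card_fin] at hcard
    omega
end
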